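/- Let Z_N be an N×N matrix with i.i.d. entries z_{ij}/√N where z_{ij} are standard complex Gaussians, and let ε ∈ {1,*}^k. Then lim_{N→∞} E[(1/N)Tr(Z^{ε₁}···Z^{ε_k})] equals the number of non-crossing pairings π of {1,...,k} such that ε_a ≠ ε_b for every pair {a,b} ∈ π. -/

import Mathlib

open MeasureTheory ProbabilityTheory Complex Matrix Filter

/-- Non-crossing set partitions of `{1,…,k}` (modeled as `Fin k`). -/
def IsNonCrossing {k : ℕ} (π : Finpartition (Finset.univ : Finset (Fin k))) : Prop :=
  ¬ ∃ (a b c d : Fin k) (B B' : Finset (Fin k)), a < b ∧ b < c ∧ c < d ∧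
      B ∈ π.parts ∧ B' ∈ π.parts ∧ B ≠ B' ∧ a ∈ B ∧ c ∈ B ∧ b ∈ B' ∧ d ∈ B'

/-- A pairing is a set partition all of whose blocks have exactly two elements. -/
def IsPairing {k : ℕ} (π : Finpartition (Finset.univ : Finset (Fin k))) : Prop :=
  ∀ B ∈ π.parts, B.card = 2

/-- The entrywise distribution of an `N × N` matrix of i.i.d. standard complex Gaussians. -/
noncomputable def gaussMatrixMeasure (N : ℕ) : Measure (Fin N → Fin N → ℝ × ℝ) :=
  Measure.pi fun _ => Measure.pi fun _ =>
    (gaussianReal 0 (1 / 2)).prod (gaussianReal 0 (1 / 2))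

/-- The Gaussian random matrix `Z_N` with entries `z_{ij}/√N`. -/
noncomputable def gaussMatrix {N : ℕ} (ω : Fin N → Fin N → ℝ × ℝ) :
    Matrix (Fin N) (Fin N) ℂ :=
  Matrix.of fun i j => (((ω i j).1 : ℂ) + ((ω i j).2 : ℂ) * I) / (Real.sqrt N : ℂ)

/-!
Gaussian integration by parts turns the first letter of a word into a sum over all the adjoint
letters it can be contracted with. A partner inside the same trace splits that trace in two, a
partner in another trace merges the two. With every trace normalized by `1 / N`, a splitting has
weight `1` and a merging has weight `1 / N ^ 2`, so in the limit only splittings survive: the joint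
moments of the traces factorize, and the moment of a word is the sum, over the partners of its first
letter, of the products of the moments of the two subwords cut out. This is the recursion of the
non-crossing pairings.
-/

section NonCrossing

/-- The number of non-crossing pairings of the positions of a word over `α` in which every letter
`a` is paired with a later letter `τ a`, by recursion on the partner of the first letter: the
letters before and after that partner are paired separately. -/
def ncPairingCount {α : Type*} [DecidableEq α] (τ : α → α) : List α → ℕ
  | [] => 1
  | a :: w => ∑ p : Fin w.length with w[p] = τ a,
      ncPairingCount τ (w.take p) * ncPairingCount τ (w.drop (p + 1))
termination_by w => w.length
decreasing_by all_goals simp only [List.length_take, List.length_drop, List.length_cons]; omega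

/-- A non-crossing perfect matching of a subset `s` of a linear order, encoded as the involution of
the whole order which exchanges partners and fixes exactly the points outside `s`. Each `x` may
only be matched with a later `y` if `r x y`. -/
structure IsNCMatching {ι : Type*} [LinearOrder ι] (r : ι → ι → Prop) (s : Set ι) (f : ι → ι) :
    Prop where
  involutive : Function.Involutive f
  apply_ne_iff : ∀ x, f x ≠ x ↔ x ∈ s
  rel : ∀ x, x < f x → r x (f x)
  nested : ∀ x y, x < y → y < f x → f y ≤ f x

/-- The map which exchanges `a` and `p`, is `f` on the other points below `p`, and `g` above. -/
def glue {ι : Type*} [LinearOrder ι] (a p : ι) (f g : ι → ι) (x : ι) : ι :=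
  if x = a then p else if x = p then a else if x < p then f x else g x

variable {ι : Type*} [LinearOrder ι] {r : ι → ι → Prop} {s t : Set ι} {f g : ι → ι} {a p : ι}

theorem isNCMatching_empty_iff : IsNCMatching r ∅ f ↔ f = id := by
  refine ⟨fun hf => funext fun x => by simpa using hf.apply_ne_iff x, ?_⟩
  rintro rfl
  exact ⟨fun _ => rfl, by simp, by simp, fun x y hxy hyx => absurd hxy hyx.not_gt⟩

namespace IsNCMatching

theorem apply_mem_iff (hf : IsNCMatching r s f) (x : ι) : f x ∈ s ↔ x ∈ s := by
  rw [← hf.apply_ne_iff, ← hf.apply_ne_iff, hf.involutive, ne_comm]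

theorem apply_of_notMem (hf : IsNCMatching r s f) {x : ι} (hx : x ∉ s) : f x = x :=
  not_not.1 (mt (hf.apply_ne_iff x).1 hx)

theorem restrict (hf : IsNCMatching r s f) (hts : t ⊆ s) (ht : ∀ x, f x ∈ t ↔ x ∈ t)
    [DecidablePred (· ∈ t)] : IsNCMatching r t fun x => if x ∈ t then f x else x := by
  obtain ⟨hinv, hne, hrel, hnest⟩ := hf
  constructor
  · intro x
    grind [hinv x]
  · grind
  · grind
  · grind

protected theorem glue (hf : IsNCMatching r s f) (hg : IsNCMatching r t g) (hap : a < p)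
    (hr : r a p) (hs : ∀ x ∈ s, a < x ∧ x < p) (ht : ∀ x ∈ t, p < x) :
    IsNCMatching r (insert a (insert p (s ∪ t))) (glue a p f g) := by
  have hfs := hf.apply_mem_iff
  have hgt := hg.apply_mem_iff
  obtain ⟨finv, fne, frel, fnest⟩ := hf
  obtain ⟨ginv, gne, grel, gnest⟩ := hg
  constructor
  · intro x
    grind [glue, finv x, ginv x]
  · grind [glue]
  · grind [glue]
  · intro x y
    grind [glue]

theorem min_lt_apply_min (hf : IsNCMatching r (insert a s) f) (ha : ∀ x ∈ s, a < x) : a < f a := by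
  have hne := (hf.apply_ne_iff a).2 (Set.mem_insert a s)
  have hmem := (hf.apply_mem_iff a).2 (Set.mem_insert a s)
  exact ha _ (hmem.resolve_left hne)

theorem apply_mem_and_lt_iff (hf : IsNCMatching r (insert a s) f) (ha : ∀ x ∈ s, a < x) (x : ι) :
    (f x ∈ s ∧ f x < f a) ↔ (x ∈ s ∧ x < f a) := by
  have h : ∀ x, x ∈ s ∧ x < f a → f x ∈ s ∧ f x < f a := by
    rintro x ⟨hx, hxa⟩
    have := hf.nested a x (ha x hx) hxa
    have := (hf.apply_mem_iff x).2 (Set.mem_insert_of_mem a hx)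
    grind [hf.involutive a, hf.involutive x]
  exact ⟨fun hx => by simpa only [hf.involutive x] using h _ hx, h x⟩

theorem apply_mem_and_gt_iff (hf : IsNCMatching r (insert a s) f) (ha : ∀ x ∈ s, a < x) (x : ι) :
    (f x ∈ s ∧ f a < f x) ↔ (x ∈ s ∧ f a < x) := by
  have := hf.apply_mem_and_lt_iff ha x
  have := hf.apply_mem_iff x
  grind [hf.involutive a, hf.involutive x]

theorem exists_eq_glue (hf : IsNCMatching r (insert a s) f) (ha : ∀ x ∈ s, a < x) :
    ∃ g h, IsNCMatching r {x | x ∈ s ∧ x < f a} g ∧ IsNCMatching r {x | x ∈ s ∧ f a < x} h ∧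
      f = glue a (f a) g h := by
  classical
  refine ⟨_, _, hf.restrict (fun x hx => .inr hx.1) (hf.apply_mem_and_lt_iff ha),
    hf.restrict (fun x hx => .inr hx.1) (hf.apply_mem_and_gt_iff ha), ?_⟩
  have hfix (x) := hf.apply_of_notMem (x := x)
  ext x
  grind [glue, hf.involutive a, hf.min_lt_apply_min ha]

theorem glue_inj {f' g' : ι → ι} (hf : IsNCMatching r s f) (hg : IsNCMatching r t g)
    (hf' : IsNCMatching r s f') (hg' : IsNCMatching r t g')
    (hs : ∀ x ∈ s, a < x ∧ x < p) (ht : ∀ x ∈ t, p < x) (hap : a < p)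
    (h : glue a p f g = glue a p f' g') : f = f' ∧ g = g' := by
  have hfx (x) := hf.apply_of_notMem (x := x)
  have hgx (x) := hg.apply_of_notMem (x := x)
  have hfx' (x) := hf'.apply_of_notMem (x := x)
  have hgx' (x) := hg'.apply_of_notMem (x := x)
  constructor <;> ext x <;> have := congrFun h x <;> grind [glue]

end IsNCMatching

theorem mem_take_iff_of_sortedLT {l : List ι} (hl : l.SortedLT) (i : Fin l.length) (x : ι) :
    x ∈ l.take i ↔ x ∈ l ∧ x < l[i] := by
  rw [List.mem_take_iff_getElem, List.mem_iff_getElem]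
  constructor
  · rintro ⟨j, hj, rfl⟩
    exact ⟨⟨j, by omega, rfl⟩, hl.getElem_lt_getElem_of_lt (by omega)⟩
  · rintro ⟨⟨j, hj, rfl⟩, hlt⟩
    have : j < i := hl.getElem_lt_getElem_iff.1 hlt
    exact ⟨j, by omega, rfl⟩

theorem mem_drop_succ_iff_of_sortedLT {l : List ι} (hl : l.SortedLT) (i : Fin l.length) (x : ι) :
    x ∈ l.drop (i + 1) ↔ x ∈ l ∧ l[i] < x := by
  rw [List.mem_drop_iff_getElem, List.mem_iff_getElem]
  constructor
  · rintro ⟨j, hj, rfl⟩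
    exact ⟨⟨_, by omega, rfl⟩, hl.getElem_lt_getElem_of_lt (by omega)⟩
  · rintro ⟨⟨j, hj, rfl⟩, hlt⟩
    have : i < j := hl.getElem_lt_getElem_iff.1 hlt
    exact ⟨j - (i + 1), by omega, by congr 1; omega⟩

/-- The non-crossing matchings of the points of a list. -/
abbrev NCMatching (r : ι → ι → Prop) (l : List ι) : Type _ :=
  {f : ι → ι // IsNCMatching r {x | x ∈ l} f}

theorem setOf_mem_cons_eq_insert {l : List ι} (hl : l.SortedLT) (a : ι) (i : Fin l.length) :
    {x | x ∈ a :: l} =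
      insert a (insert l[i] ({x | x ∈ l.take i} ∪ {x | x ∈ l.drop (i + 1)})) := by
  ext x
  have := mem_take_iff_of_sortedLT hl i x
  have := mem_drop_succ_iff_of_sortedLT hl i x
  have := List.getElem_mem i.2
  grind

/-- Non-crossing matchings of `a :: l` with `a` matched to `l[i]`, glued from matchings of the two
sublists on either side of `l[i]`. -/
def glueNCMatching {l : List ι} (hl : (a :: l).SortedLT)
    (q : Σ i : {i : Fin l.length // r a l[i]},
      NCMatching r (l.take i) × NCMatching r (l.drop (i + 1))) : NCMatching r (a :: l) :=
  ⟨glue a l[q.1.1] q.2.1 q.2.2, by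
    obtain ⟨⟨i, hi⟩, f, g⟩ := q
    obtain ⟨hal, hl⟩ := List.pairwise_cons.1 hl.pairwise
    rw [setOf_mem_cons_eq_insert hl.sortedLT a i]
    have hlow := mem_take_iff_of_sortedLT hl.sortedLT i
    have hhigh := mem_drop_succ_iff_of_sortedLT hl.sortedLT i
    exact f.2.glue g.2 (hal _ (List.getElem_mem i.2)) hi (by grind) (by grind)⟩

theorem glueNCMatching_injective {l : List ι} (hl : (a :: l).SortedLT) :
    Function.Injective (glueNCMatching (r := r) hl) := by
  rintro ⟨⟨i, hi⟩, f, g⟩ ⟨⟨j, hj⟩, f', g'⟩ h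
  obtain ⟨hal, hl⟩ := List.pairwise_cons.1 hl.pairwise
  have h := congrArg Subtype.val h
  simp only [glueNCMatching] at h
  obtain rfl : i = j := by
    have := congrFun h a
    exact hl.sortedLT.strictMono_get.injective (by simpa [glue] using this)
  have hlow := mem_take_iff_of_sortedLT hl.sortedLT i
  have hhigh := mem_drop_succ_iff_of_sortedLT hl.sortedLT i
  obtain ⟨hf, hg⟩ := f.2.glue_inj g.2 f'.2 g'.2 (by grind) (by grind)
    (hal _ (List.getElem_mem i.2)) h
  rw [Subtype.ext hf, Subtype.ext hg]

theorem glueNCMatching_surjective {l : List ι} (hl : (a :: l).SortedLT) :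
    Function.Surjective (glueNCMatching (r := r) hl) := by
  rintro ⟨h, hh⟩
  obtain ⟨hal, hl⟩ := List.pairwise_cons.1 hl.pairwise
  have hins : {x | x ∈ a :: l} = insert a {x | x ∈ l} := by ext; simp
  rw [hins] at hh
  have hlt := hh.min_lt_apply_min hal
  obtain ⟨f, g, hf, hg, heq⟩ := hh.exists_eq_glue hal
  obtain ⟨i, hi⟩ : ∃ i : Fin l.length, l[i] = h a :=
    List.get_of_mem (((hh.apply_mem_iff a).2 (.inl rfl)).resolve_left hlt.ne')
  simp only [Set.mem_ofPred_eq, ← hi, ← mem_take_iff_of_sortedLT hl.sortedLT i,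
    ← mem_drop_succ_iff_of_sortedLT hl.sortedLT i] at hf hg heq
  exact ⟨⟨⟨i, hi ▸ hh.rel a hlt⟩, ⟨f, hf⟩, ⟨g, hg⟩⟩, Subtype.ext heq.symm⟩

theorem card_ncMatching_cons [Finite ι] [DecidableRel r] {l : List ι} (hl : (a :: l).SortedLT) :
    Nat.card (NCMatching r (a :: l)) = ∑ i : Fin l.length with r a l[i],
      Nat.card (NCMatching r (l.take i)) * Nat.card (NCMatching r (l.drop (i + 1))) := by
  rw [← Nat.card_congr (Equiv.ofBijective (glueNCMatching hl)
    ⟨glueNCMatching_injective hl, glueNCMatching_surjective hl⟩), Nat.card_sigma]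
  simp only [Nat.card_prod]
  exact (Finset.sum_subtype _ (by simp) fun i : Fin l.length =>
    Nat.card (NCMatching r (l.take i)) * Nat.card (NCMatching r (l.drop (i + 1)))).symm

theorem card_ncMatching [Finite ι] {α : Type*} [DecidableEq α] (τ : α → α) (ε : ι → α)
    {l : List ι} (hl : l.SortedLT) :
    Nat.card (NCMatching (fun x y => ε y = τ (ε x)) l) = ncPairingCount τ (l.map ε) := by
  induction hn : l.length using Nat.strong_induction_on generalizing l with
  | h n ih =>
    subst hn
    cases l with
    | nil => simp [ncPairingCount, NCMatching, isNCMatching_empty_iff]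
    | cons a l =>
      have hl' := (List.pairwise_cons.1 hl.pairwise).2
      rw [card_ncMatching_cons hl, List.map_cons, ncPairingCount]
      refine Finset.sum_equiv (finCongr (List.length_map ε).symm) (by simp) fun i _ => ?_
      rw [ih _ (by simp) (hl'.sublist (List.take_sublist i l)).sortedLT rfl,
        ih _ (by simp) (hl'.sublist (List.drop_sublist (i + 1) l)).sortedLT rfl]
      simp [List.map_take, List.map_drop]

end NonCrossing

section OrbitPartition

variable {ι : Type*} [Fintype ι] [DecidableEq ι] {g g' : ι → ι}

/-- The partition of a finite type into the orbits `{x, g x}` of an involution `g`. -/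
def orbitPartition (g : ι → ι) (hg : Function.Involutive g) :
    Finpartition (Finset.univ : Finset ι) :=
  Finpartition.ofExistsUnique (Finset.univ.image fun x => {x, g x})
    (fun _ _ => Finset.subset_univ _)
    (fun a _ => by
      refine ⟨{a, g a}, ⟨Finset.mem_image_of_mem _ (Finset.mem_univ a), by simp⟩, ?_⟩
      rintro t ⟨ht, hat⟩
      obtain ⟨x, -, rfl⟩ := Finset.mem_image.1 ht
      obtain rfl | rfl : a = x ∨ a = g x := by simpa using hat
      · rfl
      · rw [hg, Finset.pair_comm])
    (by simp)

theorem mem_parts_orbitPartition (hg : Function.Involutive g) {B : Finset ι} :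
    B ∈ (orbitPartition g hg).parts ↔ ∃ x, {x, g x} = B := by
  simp [orbitPartition, Finpartition.ofExistsUnique]

theorem part_orbitPartition (hg : Function.Involutive g) (x : ι) :
    (orbitPartition g hg).part x = {x, g x} :=
  Finpartition.part_eq_of_mem _ ((mem_parts_orbitPartition hg).2 ⟨x, rfl⟩) (by simp)

theorem orbitPartition_inj (hg : Function.Involutive g) (hg' : Function.Involutive g') :
    orbitPartition g hg = orbitPartition g' hg' ↔ g = g' := by
  refine ⟨fun h => funext fun x => ?_, by rintro rfl; rfl⟩
  have hx : ({x, g x} : Finset ι) = {x, g' x} := by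
    rw [← part_orbitPartition hg, ← part_orbitPartition hg', h]
  have := Finset.ext_iff.1 hx (g x)
  have := Finset.ext_iff.1 hx (g' x)
  grind

theorem exists_orbitPartition_eq {π : Finpartition (Finset.univ : Finset ι)}
    (hπ : ∀ B ∈ π.parts, B.card = 2) :
    ∃ (g : ι → ι) (hg : Function.Involutive g), orbitPartition g hg = π := by
  have hmem : ∀ x, x ∈ π.part x := fun x => π.mem_part (Finset.mem_univ x)
  have hpart : ∀ x, π.part x ∈ π.parts := fun x => π.part_mem.2 (Finset.mem_univ x)
  have hpair : ∀ x, ∃ y, y ≠ x ∧ π.part x = {x, y} := by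
    intro x
    obtain ⟨a, b, hab, h⟩ := Finset.card_eq_two.1 (hπ _ (hpart x))
    obtain rfl | rfl : x = a ∨ x = b := by simpa [h] using hmem x
    · exact ⟨b, hab.symm, h⟩
    · exact ⟨a, hab, by rw [h, Finset.pair_comm]⟩
  choose g hne hg using hpair
  have hpart_g : ∀ x, π.part (g x) = π.part x := fun x =>
    π.part_eq_of_mem (hpart x) (by simp [hg x])
  have hinv : Function.Involutive g := fun x => by
    have := hg (g x)
    grind
  refine ⟨g, hinv, Finpartition.ext (Finset.ext fun B => ?_)⟩
  simp only [mem_parts_orbitPartition, ← hg]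
  exact ⟨fun ⟨x, hx⟩ => hx ▸ hpart x, fun hB =>
    (π.nonempty_of_mem_parts hB).imp fun x hx => π.part_eq_of_mem hB hx⟩

theorem forall_mem_parts_orbitPartition_iff {r : ι → ι → Prop} (hg : Function.Involutive g)
    (hne : ∀ x, g x ≠ x) :
    (∀ B ∈ (orbitPartition g hg).parts, ∀ a ∈ B, ∀ b ∈ B, a ≠ b → r a b) ↔ ∀ x, r x (g x) := by
  simp only [mem_parts_orbitPartition, forall_exists_index, forall_apply_eq_imp_iff]
  refine ⟨fun h x => h x x (by simp) (g x) (by simp) (hne x).symm, fun h x a ha b hb hab => ?_⟩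
  have := h x
  have := h (g x)
  grind [hg x]

variable {k : ℕ}

theorem isPairing_orbitPartition_iff {g : Fin k → Fin k} (hg : Function.Involutive g) :
    IsPairing (orbitPartition g hg) ↔ ∀ x, g x ≠ x := by
  simp only [IsPairing, mem_parts_orbitPartition, forall_exists_index, forall_apply_eq_imp_iff]
  exact forall_congr' fun x => Finset.card_pair_eq_two_iff.trans ne_comm

theorem isNonCrossing_orbitPartition_iff {g : Fin k → Fin k} (hg : Function.Involutive g) :
    IsNonCrossing (orbitPartition g hg) ↔ ∀ x y, x < y → y < g x → g y ≤ g x := by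
  simp only [IsNonCrossing, mem_parts_orbitPartition]
  constructor
  · intro h x y hxy hy
    by_contra! hlt
    refine h ⟨x, y, g x, g y, _, _, hxy, hy, hlt, ⟨x, rfl⟩, ⟨y, rfl⟩, fun heq => ?_,
      by simp⟩
    have : y = x ∨ y = g x := by simpa [← heq] using Finset.mem_insert_self y {g y}
    exact this.elim hxy.ne' hy.ne
  · rintro h ⟨a, b, c, d, _, _, hab, hbc, hcd, ⟨x, rfl⟩, ⟨y, rfl⟩, -, ha, hc, hb, hd⟩
    have := h a b hab
    grind [hg x, hg y]

theorem isNCMatching_univ_iff {g : Fin k → Fin k} (hg : Function.Involutive g)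
    {r : Fin k → Fin k → Prop} [Std.Symm r] :
    IsNCMatching r Set.univ g ↔ IsPairing (orbitPartition g hg) ∧
      IsNonCrossing (orbitPartition g hg) ∧
      ∀ B ∈ (orbitPartition g hg).parts, ∀ a ∈ B, ∀ b ∈ B, a ≠ b → r a b := by
  rw [isPairing_orbitPartition_iff, isNonCrossing_orbitPartition_iff]
  constructor
  · rintro ⟨-, hne, hrel, hnest⟩
    have hne : ∀ x, g x ≠ x := fun x => (hne x).2 trivial
    refine ⟨hne, hnest, (forall_mem_parts_orbitPartition_iff hg hne).2 fun x => ?_⟩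
    obtain h | h := (hne x).lt_or_gt
    · exact symm_of r (by simpa only [hg x] using hrel (g x) (by rwa [hg x]))
    · exact hrel x h
  · rintro ⟨hne, hnest, hrel⟩
    exact ⟨hg, fun x => by simp [hne x],
      fun x _ => (forall_mem_parts_orbitPartition_iff hg hne).1 hrel x, hnest⟩

theorem card_ncPairing {r : Fin k → Fin k → Prop} [Std.Symm r] :
    Nat.card {π : Finpartition (Finset.univ : Finset (Fin k)) // IsPairing π ∧ IsNonCrossing π ∧
      ∀ B ∈ π.parts, ∀ a ∈ B, ∀ b ∈ B, a ≠ b → r a b} =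
    Nat.card (NCMatching r (List.finRange k)) := by
  have huniv : {x | x ∈ List.finRange k} = Set.univ := by simp
  unfold NCMatching
  rw [huniv]
  refine (Nat.card_congr (Equiv.ofBijective (fun g => ⟨orbitPartition g.1 g.2.involutive,
    (isNCMatching_univ_iff g.2.involutive).1 g.2⟩) ⟨fun g g' h => ?_, ?_⟩)).symm
  · exact Subtype.ext <|
      (orbitPartition_inj g.2.involutive g'.2.involutive).1 (congrArg Subtype.val h)
  · rintro ⟨π, hπ⟩
    obtain ⟨g, hg, rfl⟩ := exists_orbitPartition_eq hπ.1
    exact ⟨⟨g, (isNCMatching_univ_iff hg).2 hπ⟩, rfl⟩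

theorem card_ncPairing_ne (ε : Fin k → Bool) :
    Nat.card {π : Finpartition (Finset.univ : Finset (Fin k)) // IsPairing π ∧ IsNonCrossing π ∧
      ∀ B ∈ π.parts, ∀ a ∈ B, ∀ b ∈ B, a ≠ b → ε a ≠ ε b} =
    ncPairingCount (!·) ((List.finRange k).map ε) := by
  have : Std.Symm fun x y => ε x ≠ ε y := ⟨fun _ _ => Ne.symm⟩
  rw [card_ncPairing, ← card_ncMatching _ _ (List.sortedLT_finRange k)]
  simp only [Bool.eq_not, ne_comm]

end OrbitPartition

section LoopEquation

theorem derivation_list_prod {K R M : Type*} [CommSemiring K] [CommSemiring R] [Algebra K R]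
    [AddCommMonoid M] [Module K M] [Module R M] (D : Derivation K R M) (l : List R) :
    D l.prod = ∑ i : Fin l.length, (l.eraseIdx i).prod • D l[i] := by
  induction l with
  | nil => simp
  | cons a l ih =>
    rw [List.prod_cons, D.leibniz, ih, Finset.smul_sum, add_comm]
    exact (Fin.sum_univ_succ (n := l.length) fun i =>
      ((a :: l).eraseIdx i).prod • D (a :: l)[i]).trans (by simp [mul_smul]) |>.symm

theorem map_derivation_mul {K R l m n : Type*} [CommSemiring K] [CommSemiring R] [Algebra K R]
    [Fintype m] (D : Derivation K R R) (M : Matrix l m R) (N : Matrix m n R) :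
    (M * N).map D = M.map D * N + M * N.map D := by
  ext i j
  simp only [Matrix.map_apply, Matrix.add_apply, Matrix.mul_apply, map_sum, Derivation.leibniz,
    smul_eq_mul, ← Finset.sum_add_distrib]
  exact Finset.sum_congr rfl fun k _ => by ring

variable {α n K R E : Type*} [Fintype n] [DecidableEq n] [CommSemiring K] [CommSemiring R]
  [Algebra K R] [AddCommMonoid E] [Module K E] {A : α → Matrix n n R}

/-- The product of the matrices named by the letters of a word. -/
def wordProd (A : α → Matrix n n R) (w : List α) : Matrix n n R := (w.map A).prod

/-- The product, over a list of words, of the traces of the corresponding matrix products. -/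
def traceProd (A : α → Matrix n n R) (W : List (List α)) : R :=
  (W.map fun w => (wordProd A w).trace).prod

@[simp] theorem wordProd_nil : wordProd A [] = 1 := rfl

theorem wordProd_cons (a : α) (w : List α) : wordProd A (a :: w) = A a * wordProd A w := by
  simp [wordProd]

theorem wordProd_append (v w : List α) : wordProd A (v ++ w) = wordProd A v * wordProd A w := by
  simp [wordProd]

@[simp] theorem traceProd_nil : traceProd A [] = 1 := rfl

theorem traceProd_cons (w : List α) (W : List (List α)) :
    traceProd A (w :: W) = (wordProd A w).trace * traceProd A W := by
  simp [traceProd]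

theorem map_wordProd {S F : Type*} [CommSemiring S] [FunLike F R S] [RingHomClass F R S] (φ : F)
    (w : List α) : (wordProd A w).map φ = wordProd (fun a => (A a).map φ) w := by
  induction w with
  | nil => simp [Matrix.map_one]
  | cons a w ih => rw [wordProd_cons, wordProd_cons, Matrix.map_mul, ih]

theorem map_traceProd {S F : Type*} [CommSemiring S] [FunLike F R S] [RingHomClass F R S] (φ : F)
    (W : List (List α)) : φ (traceProd A W) = traceProd (fun a => (A a).map φ) W := by
  induction W with
  | nil => simp
  | cons w W ih =>
    rw [traceProd_cons, traceProd_cons, map_mul, ih, ← map_wordProd]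
    simp [Matrix.trace]

theorem derivation_traceProd (D : Derivation K R R) (W : List (List α)) :
    D (traceProd A W) = ∑ J : Fin W.length,
      D (wordProd A W[J]).trace * traceProd A (W.eraseIdx J) := by
  rw [traceProd, derivation_list_prod, ← (finCongr (List.length_map _)).symm.sum_comp]
  exact Finset.sum_congr rfl fun J _ => by simp [traceProd, List.eraseIdx_map, mul_comm]

variable [DecidableEq α] {D : α → n → n → Derivation K R R}

theorem map_derivation_wordProd
    (hD : ∀ a i j b, (A b).map (D a i j) = if b = a then Matrix.single i j 1 else 0)
    (a : α) (i j : n) (w : List α) :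
    (wordProd A w).map (D a i j) = ∑ p : Fin w.length with w[p] = a,
      wordProd A (w.take p) * Matrix.single i j 1 * wordProd A (w.drop (p + 1)) := by
  rw [Finset.sum_filter]
  induction w with
  | nil => ext k l; simp [Matrix.one_apply, apply_ite (D a i j)]
  | cons b w ih =>
    rw [wordProd_cons, map_derivation_mul, ih, hD, Finset.mul_sum]
    refine Eq.trans ?_ (Fin.sum_univ_succ (n := w.length) fun p => if (b :: w)[p] = a then
      wordProd A ((b :: w).take p) * Matrix.single i j 1 * wordProd A ((b :: w).drop (p + 1))
      else 0).symm
    simp [wordProd_cons, mul_assoc]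

theorem sum_derivation_wordProd
    (hD : ∀ a i j b, (A b).map (D a i j) = if b = a then Matrix.single i j 1 else 0)
    (a : α) (w : List α) :
    ∑ i, ∑ j, D a i j (wordProd A w i j) = ∑ p : Fin w.length with w[p] = a,
      (wordProd A (w.take p)).trace * (wordProd A (w.drop (p + 1))).trace := by
  have hentry : ∀ i j, D a i j (wordProd A w i j) = ∑ p : Fin w.length with w[p] = a,
      wordProd A (w.take p) i i * wordProd A (w.drop (p + 1)) j j := fun i j => by
    rw [← Matrix.map_apply (f := D a i j), map_derivation_wordProd hD, Matrix.sum_apply]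
    simp [Matrix.mul_apply, Matrix.single_apply, ite_and]
  simp only [hentry, Matrix.trace, Matrix.diag, Finset.sum_mul_sum]
  rw [Finset.sum_comm_cycle]

theorem derivation_trace_wordProd
    (hD : ∀ a i j b, (A b).map (D a i j) = if b = a then Matrix.single i j 1 else 0)
    (a : α) (i j : n) (w : List α) :
    D a i j (wordProd A w).trace = ∑ p : Fin w.length with w[p] = a,
      wordProd A (w.drop (p + 1) ++ w.take p) j i := by
  have htrace : D a i j (wordProd A w).trace = ((wordProd A w).map (D a i j)).trace := by
    simp [Matrix.trace]
  rw [htrace, map_derivation_wordProd hD, Matrix.trace_sum]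
  refine Finset.sum_congr rfl fun p _ => ?_
  rw [mul_assoc, Matrix.trace_mul_comm, mul_assoc, Matrix.trace_single_mul, one_smul,
    wordProd_append]

theorem sum_mul_derivation_traceProd
    (hD : ∀ a i j b, (A b).map (D a i j) = if b = a then Matrix.single i j 1 else 0)
    (a : α) (w : List α) (W : List (List α)) :
    ∑ i, ∑ j, wordProd A w i j * D a i j (traceProd A W) =
      ∑ J : Fin W.length, ∑ q : Fin W[J].length with W[J][q] = a,
        traceProd A ((w ++ (W[J].drop (q + 1) ++ W[J].take q)) :: W.eraseIdx J) := by
  have htrace (v : List α) (r : R) : (wordProd A (w ++ v)).trace * r =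
      ∑ i, ∑ j, wordProd A w i j * (wordProd A v j i * r) := by
    simp [wordProd_append, Matrix.trace, Matrix.mul_apply, Finset.sum_mul, mul_assoc]
  simp only [derivation_traceProd, derivation_trace_wordProd hD, traceProd_cons, htrace,
    Finset.sum_mul, Finset.mul_sum]
  simp only [Finset.sum_comm (γ := Fin _) (α := n)]

/-- The hypothesis `hL` is integration by parts: multiplying by `A a i j` amounts to
differentiating in the dual variable `A (τ a) j i`. -/
theorem loop_equation
    (hD : ∀ a i j b, (A b).map (D a i j) = if b = a then Matrix.single i j 1 else 0)
    {L : R →ₗ[K] E} {τ : α → α} {c : K}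
    (hL : ∀ a i j f, L (A a i j * f) = c • L (D (τ a) j i f))
    (a : α) (w : List α) (W : List (List α)) :
    L (traceProd A ((a :: w) :: W)) = c • (
      ∑ p : Fin w.length with w[p] = τ a, L (traceProd A (w.take p :: w.drop (p + 1) :: W)) +
      ∑ J : Fin W.length, ∑ q : Fin W[J].length with W[J][q] = τ a,
        L (traceProd A ((w ++ (W[J].drop (q + 1) ++ W[J].take q)) :: W.eraseIdx J))) := by
  have hexpand : traceProd A ((a :: w) :: W) =
      ∑ j, ∑ i, A a i j * (wordProd A w j i * traceProd A W) := by
    rw [Finset.sum_comm]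
    simp [traceProd_cons, wordProd_cons, Matrix.trace, Matrix.mul_apply, Finset.sum_mul, mul_assoc]
  have hsplit : ∑ j, ∑ i, D (τ a) j i (wordProd A w j i) * traceProd A W =
      ∑ p : Fin w.length with w[p] = τ a, traceProd A (w.take p :: w.drop (p + 1) :: W) := by
    simp only [traceProd_cons, ← mul_assoc, ← Finset.sum_mul, sum_derivation_wordProd hD]
  simp only [← map_sum, ← hsplit, ← sum_mul_derivation_traceProd hD, ← map_add,
    ← Finset.sum_add_distrib]
  rw [hexpand]
  simp only [map_sum, hL, ← Finset.smul_sum, Derivation.leibniz, smul_eq_mul]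
  simp only [mul_comm, add_comm]

end LoopEquation

section LoopLimit

/-- Splitting the first word lowers the total length by two and adds one word, merging it with
another one lowers both: hence the induction on total length plus number of words. -/
theorem tendsto_prod_ncPairingCount {α ι R : Type*} [DecidableEq α] [CommSemiring R]
    [TopologicalSpace R] [IsTopologicalSemiring R] {τ : α → α} {l : Filter ι}
    {φ : ι → List (List α) → R} {δ : ι → R} (hδ : Tendsto δ l (nhds 0))
    (hone : ∀ᶠ t in l, φ t [] = 1) (hnil : ∀ᶠ t in l, ∀ W, φ t ([] :: W) = φ t W)
    (hloop : ∀ᶠ t in l, ∀ a w W, φ t ((a :: w) :: W) =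
      ∑ p : Fin w.length with w[p] = τ a, φ t (w.take p :: w.drop (p + 1) :: W) +
      δ t * ∑ J : Fin W.length, ∑ q : Fin W[J].length with W[J][q] = τ a,
        φ t ((w ++ (W[J].drop (q + 1) ++ W[J].take q)) :: W.eraseIdx J))
    (W : List (List α)) :
    Tendsto (φ · W) l (nhds ((W.map fun w => (ncPairingCount τ w : R)).prod)) := by
  induction hm : (W.map (·.length + 1)).sum using Nat.strong_induction_on generalizing W with
  | _ m ih =>
    subst hm
    match W with
    | [] =>
      refine tendsto_const_nhds.congr' ?_
      filter_upwards [hone] with t ht using by simp [ht]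
    | [] :: W =>
      refine Tendsto.congr' (f₁ := (φ · W)) (hnil.mono fun t ht => (ht W).symm) ?_
      simpa [ncPairingCount] using ih _ (by simp) W rfl
    | (a :: w) :: W =>
      have hsplit (p : Fin w.length) : Tendsto (φ · (w.take p :: w.drop (p + 1) :: W)) l _ :=
        ih _ (by simp; omega) _ rfl
      have hlength (J : Fin W.length) (q : Fin W[J].length) :
          (((w ++ (W[J].drop (q + 1) ++ W[J].take q)) :: W.eraseIdx J).map (·.length + 1)).sum <
            (((a :: w) :: W).map (·.length + 1)).sum := by
        have hJ := List.CommMonoid.add_sum_eraseIdx (l := W.map (·.length + 1)) (i := J) (by simp)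
        simp only [List.getElem_map, List.eraseIdx_map] at hJ
        simp only [List.map_cons, List.sum_cons, List.length_cons, List.length_append,
          List.length_drop, List.length_take, Fin.getElem_fin]
        omega
      have hmerge (J : Fin W.length) : Tendsto (fun t => ∑ q : Fin W[J].length with W[J][q] = τ a,
          φ t ((w ++ (W[J].drop (q + 1) ++ W[J].take q)) :: W.eraseIdx J)) l _ :=
        tendsto_finsetSum _ fun q _ => ih _ (hlength J q) _ rfl
      refine Tendsto.congr' (hloop.mono fun t ht => (ht a w W).symm) ?_
      convert Tendsto.add (tendsto_finsetSum _ fun p _ => hsplit p)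
        (hδ.mul (tendsto_finsetSum _ fun J _ => hmerge J)) using 2
      simp [ncPairingCount, Finset.sum_mul, mul_assoc]

end LoopLimit

section Stein

open scoped NNReal

theorem hasDerivAt_gaussianPDFReal (μ : ℝ) {v : ℝ≥0} (hv : v ≠ 0) (x : ℝ) :
    HasDerivAt (gaussianPDFReal μ v) (-((x - μ) / v) * gaussianPDFReal μ v x) x := by
  have hexponent : HasDerivAt (fun x => -(x - μ) ^ 2 / (2 * (v : ℝ))) (-((x - μ) / v)) x := by
    refine ((((hasDerivAt_id' x).sub_const μ).pow 2).neg.div_const (2 * (v : ℝ))).congr_deriv ?_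
    simp
    field_simp
  rw [gaussianPDFReal_def]
  exact (hexponent.exp.const_mul _).congr_deriv (by ring)

theorem integrable_gaussianPDFReal_smul {E : Type*} [NormedAddCommGroup E] [NormedSpace ℝ E]
    {μ : ℝ} {v : ℝ≥0} (hv : v ≠ 0) {f : ℝ → E} (hf : Integrable f (gaussianReal μ v)) :
    Integrable fun x => gaussianPDFReal μ v x • f x := by
  rw [gaussianReal_of_var_ne_zero _ hv, integrable_withDensity_iff_integrable_smul'
    (measurable_gaussianPDF _ _) (ae_of_all _ fun _ => gaussianPDF_lt_top)] at hf
  simpa using hf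

/-- **Stein's lemma**, that is, Gaussian integration by parts. -/
theorem integral_sub_smul_gaussianReal {E : Type*} [NormedAddCommGroup E] [NormedSpace ℝ E]
    {μ : ℝ} {v : ℝ≥0} {f f' : ℝ → E} (hderiv : ∀ x, HasDerivAt f (f' x) x)
    (hf : Integrable f (gaussianReal μ v)) (hf' : Integrable f' (gaussianReal μ v))
    (hxf : Integrable (fun x => (x - μ) • f x) (gaussianReal μ v)) :
    ∫ x, (x - μ) • f x ∂gaussianReal μ v = v • ∫ x, f' x ∂gaussianReal μ v := by
  rcases eq_or_ne v 0 with rfl | hv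
  · by_cases hE : CompleteSpace E
    · simp
    · simp [integral_of_not_completeSpace hE]
  have hsmul (x : ℝ) : (-((x - μ) / v) * gaussianPDFReal μ v x) • f x =
      (-(v : ℝ)⁻¹) • gaussianPDFReal μ v x • (x - μ) • f x := by
    simp only [smul_smul]
    congr 1
    ring
  have hparts := integral_bilinear_hasDerivAt_right_eq_neg_left_of_integrable
    (L := ContinuousLinearMap.lsmul ℝ ℝ) (fun x _ => hasDerivAt_gaussianPDFReal μ hv x)
    (fun x _ => hderiv x) (integrable_gaussianPDFReal_smul hv hf')
    (by simpa only [ContinuousLinearMap.lsmul_apply, hsmul] using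
      (integrable_gaussianPDFReal_smul hv hxf).fun_smul (-(v : ℝ)⁻¹))
    (integrable_gaussianPDFReal_smul hv hf)
  simp only [ContinuousLinearMap.lsmul_apply, hsmul, integral_smul] at hparts
  rw [integral_gaussianReal_eq_integral_smul hv, integral_gaussianReal_eq_integral_smul hv, hparts,
    NNReal.smul_def, neg_smul, neg_neg, smul_inv_smul₀ (NNReal.coe_ne_zero.2 hv)]

end Stein

section Moments

open scoped ENNReal NNReal

theorem memLp_eval_mvPolynomial {σ Ω : Type*} [MeasurableSpace Ω] {P : Measure Ω}
    [IsFiniteMeasure P] {x : σ → Ω → ℂ} (hx : ∀ i p, p ≠ ∞ → MemLp (x i) p P)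
    (f : MvPolynomial σ ℂ) {p : ℝ≥0∞} (hp : p ≠ ∞) :
    MemLp (fun ω => MvPolynomial.eval (x · ω) f) p P := by
  induction f using MvPolynomial.induction_on generalizing p with
  | C a => simpa using memLp_const a
  | add f g hf hg =>
    simp only [map_add]
    exact (hf hp).add (hg hp)
  | mul_X f i hf =>
    have hHolder : ENNReal.HolderTriple (p * 2) (p * 2) p := ⟨by
      rw [ENNReal.mul_inv (by simp) (by simp), ← mul_add, ENNReal.inv_two_add_inv_two, mul_one]⟩
    have hp2 : p * 2 ≠ ∞ := ENNReal.mul_ne_top hp ENNReal.ofNat_ne_top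
    simpa using (hx i _ hp2).mul' (hf hp2)

/-- The values of the variables `(false, i)` and `(true, i)` standing for `z i` and for its complex
conjugate. -/
def withStar {ι : Type*} (z : ι → ℂ) (q : Bool × ι) : ℂ := if q.1 then star (z q.2) else z q.2

theorem integrable_eval_withStar {ι Ω : Type*} [MeasurableSpace Ω] {P : Measure Ω}
    [IsFiniteMeasure P] {z : ι → Ω → ℂ} (hz : ∀ i p, p ≠ ∞ → MemLp (z i) p P)
    (f : MvPolynomial (Bool × ι) ℂ) :
    Integrable (fun ω => MvPolynomial.eval (withStar (z · ω)) f) P := by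
  refine memLp_one_iff_integrable.1 (memLp_eval_mvPolynomial
    (x := fun q ω => withStar (z · ω) q) (fun q p hp => ?_) f ENNReal.one_ne_top)
  rcases q with ⟨_ | _, i⟩
  · exact hz i p hp
  · exact (hz i p hp).star

theorem integrable_pow_mul_star_pow {Ω : Type*} [MeasurableSpace Ω] {P : Measure Ω}
    [IsFiniteMeasure P] {z : Ω → ℂ} (hz : ∀ p, p ≠ ∞ → MemLp z p P) (a b : ℕ) :
    Integrable (fun ω => z ω ^ a * star (z ω) ^ b) P := by
  refine (integrable_eval_withStar (fun _ : Unit => hz) (MvPolynomial.X (false, ()) ^ a *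
    MvPolynomial.X (true, ()) ^ b)).congr <| ae_of_all _ fun ω => ?_
  simp [withStar]

end Moments

section CircularGaussian

open scoped ENNReal NNReal

section Prod

variable {Y E : Type*} [MeasurableSpace Y] {ν : Measure Y} [SFinite ν] [NormedAddCommGroup E]
  [NormedSpace ℝ E] {μ : ℝ} {v : ℝ≥0}

theorem integral_fst_sub_smul_gaussianReal_prod {g g' : ℝ × Y → E}
    (hderiv : ∀ x y, HasDerivAt (fun t => g (t, y)) (g' (x, y)) x)
    (hg : Integrable g ((gaussianReal μ v).prod ν))
    (hg' : Integrable g' ((gaussianReal μ v).prod ν))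
    (hxg : Integrable (fun p => (p.1 - μ) • g p) ((gaussianReal μ v).prod ν)) :
    ∫ p, (p.1 - μ) • g p ∂(gaussianReal μ v).prod ν =
      v • ∫ p, g' p ∂(gaussianReal μ v).prod ν := by
  rw [integral_prod_symm _ hxg, integral_prod_symm _ hg', NNReal.smul_def, ← integral_smul]
  refine integral_congr_ae ?_
  filter_upwards [hg.prod_left_ae, hg'.prod_left_ae, hxg.prod_left_ae] with y hy hy' hxy
  exact integral_sub_smul_gaussianReal (fun x => hderiv x y) hy hy' hxy

theorem integral_snd_sub_smul_prod_gaussianReal {g g' : Y × ℝ → E}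
    (hderiv : ∀ y x, HasDerivAt (fun t => g (y, t)) (g' (y, x)) x)
    (hg : Integrable g (ν.prod (gaussianReal μ v)))
    (hg' : Integrable g' (ν.prod (gaussianReal μ v)))
    (hxg : Integrable (fun p => (p.2 - μ) • g p) (ν.prod (gaussianReal μ v))) :
    ∫ p, (p.2 - μ) • g p ∂ν.prod (gaussianReal μ v) =
      v • ∫ p, g' p ∂ν.prod (gaussianReal μ v) := by
  rw [← integral_prod_swap, ← integral_prod_swap (f := g')]
  exact integral_fst_sub_smul_gaussianReal_prod (fun x y => hderiv y x) hg.swap hg'.swap hxg.swap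

end Prod

/-- The operator `∂/∂x + i ∂/∂y` on the right is twice the Wirtinger derivative `∂/∂z̄`. -/
theorem integral_add_mul_I_mul_gaussianReal_prod {v : ℝ≥0} {g gx gy : ℝ × ℝ → ℂ}
    (hx : ∀ x y, HasDerivAt (fun t => g (t, y)) (gx (x, y)) x)
    (hy : ∀ x y, HasDerivAt (fun t => g (x, t)) (gy (x, y)) y)
    (hg : Integrable g ((gaussianReal 0 v).prod (gaussianReal 0 v)))
    (hgx : Integrable gx ((gaussianReal 0 v).prod (gaussianReal 0 v)))
    (hgy : Integrable gy ((gaussianReal 0 v).prod (gaussianReal 0 v)))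
    (hzg : Integrable (fun p => (p.1 + p.2 * I) * g p)
      ((gaussianReal 0 v).prod (gaussianReal 0 v))) :
    ∫ p, (p.1 + p.2 * I) * g p ∂(gaussianReal 0 v).prod (gaussianReal 0 v) =
      v * ∫ p, gx p + I * gy p ∂(gaussianReal 0 v).prod (gaussianReal 0 v) := by
  have hxg : Integrable (fun p => (p.1 - 0) • g p) ((gaussianReal 0 v).prod (gaussianReal 0 v)) :=
    hzg.mono (by fun_prop) <| ae_of_all _ fun p => by
      simpa using mul_le_mul_of_nonneg_right (abs_re_le_norm (p.1 + p.2 * I)) (norm_nonneg (g p))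
  have hyg : Integrable (fun p => (p.2 - 0) • g p) ((gaussianReal 0 v).prod (gaussianReal 0 v)) :=
    hzg.mono (by fun_prop) <| ae_of_all _ fun p => by
      simpa using mul_le_mul_of_nonneg_right (abs_im_le_norm (p.1 + p.2 * I)) (norm_nonneg (g p))
  calc ∫ p, (p.1 + p.2 * I) * g p ∂(gaussianReal 0 v).prod (gaussianReal 0 v)
      = ∫ p, (p.1 - 0) • g p + I * ((p.2 - 0) • g p)
          ∂(gaussianReal 0 v).prod (gaussianReal 0 v) := by
        refine integral_congr_ae <| ae_of_all _ fun p => ?_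
        simp only [sub_zero, real_smul]
        ring
    _ = v * ∫ p, gx p + I * gy p ∂(gaussianReal 0 v).prod (gaussianReal 0 v) := by
        rw [integral_add hxg (hyg.const_mul I), integral_const_mul,
          integral_fst_sub_smul_gaussianReal_prod hx hg hgx hxg,
          integral_snd_sub_smul_prod_gaussianReal hy hg hgy hyg,
          integral_add hgx (hgy.const_mul I), integral_const_mul, NNReal.smul_def, NNReal.smul_def,
          real_smul, real_smul]
        ring

/-- The law of `x + i y` for independent centred real Gaussians `x` and `y` of variance `v`. -/
noncomputable def circularGaussian (v : ℝ≥0) : Measure ℂ :=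
  ((gaussianReal 0 v).prod (gaussianReal 0 v)).map fun p => p.1 + p.2 * I

theorem hasLaw_div_circularGaussian (v : ℝ≥0) (c : ℝ) :
    HasLaw (fun z : ℂ => z / c) (circularGaussian (v / .mk (c ^ 2) (sq_nonneg c)))
      (circularGaussian v) := by
  refine ⟨by fun_prop, ?_⟩
  have hreal : (gaussianReal 0 v).map (· / c) = gaussianReal 0 (v / .mk (c ^ 2) (sq_nonneg c)) := by
    rw [gaussianReal_map_div_const, zero_div]
  rw [circularGaussian, circularGaussian, ← hreal, Measure.map_prod_map _ _ (by fun_prop)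
    (by fun_prop), Measure.map_map (by fun_prop) (by fun_prop),
    Measure.map_map (by fun_prop) (by fun_prop)]
  congr 1 with p
  simp [add_div, mul_div_right_comm]

theorem memLp_add_mul_I_gaussianReal_prod (v : ℝ≥0) {p : ℝ≥0∞} (hp : p ≠ ∞) :
    MemLp (fun x : ℝ × ℝ => (x.1 : ℂ) + x.2 * I) p
      ((gaussianReal 0 v).prod (gaussianReal 0 v)) := by
  have hreal : MemLp (fun x : ℝ => (x : ℂ)) p (gaussianReal 0 v) :=
    (memLp_id_gaussianReal' p hp).ofReal
  exact (hreal.comp_fst _).add ((hreal.comp_snd _).mul_const I)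

theorem memLp_id_circularGaussian (v : ℝ≥0) {p : ℝ≥0∞} (hp : p ≠ ∞) :
    MemLp id p (circularGaussian v) := by
  rw [circularGaussian, memLp_map_measure_iff (by fun_prop) (by fun_prop)]
  exact memLp_add_mul_I_gaussianReal_prod v hp

theorem memLp_of_hasLaw_circularGaussian {Ω : Type*} [MeasurableSpace Ω] {P : Measure Ω} {v : ℝ≥0}
    {X : Ω → ℂ} (hX : HasLaw X (circularGaussian v) P) {p : ℝ≥0∞} (hp : p ≠ ∞) : MemLp X p P := by
  have h := memLp_id_circularGaussian v hp
  rw [← hX.map_eq] at h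
  exact h.comp_of_map hX.aemeasurable

theorem hasDerivAt_pow_mul_star_pow {z : ℝ → ℂ} {z' : ℂ} {t : ℝ} (hz : HasDerivAt z z' t)
    (a b : ℕ) : HasDerivAt (fun t => z t ^ a * star (z t) ^ b)
      (a * z' * (z t ^ (a - 1) * star (z t) ^ b) +
        b * star z' * (z t ^ a * star (z t) ^ (b - 1))) t := by
  refine ((hz.pow a).mul (hz.star.pow b)).congr_deriv ?_
  simp
  ring

theorem integral_pow_succ_mul_star_pow_circularGaussian (v : ℝ≥0) (a b : ℕ) :
    ∫ z, z ^ (a + 1) * star z ^ b ∂circularGaussian v =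
      2 * v * (b * ∫ z, z ^ a * star z ^ (b - 1) ∂circularGaussian v) := by
  let z : ℝ × ℝ → ℂ := fun p => p.1 + p.2 * I
  have hint := integrable_pow_mul_star_pow (z := z)
    fun _ => memLp_add_mul_I_gaussianReal_prod v
  have hint' (s t : ℂ) : Integrable (fun p => a * s * (z p ^ (a - 1) * star (z p) ^ b) +
      b * t * (z p ^ a * star (z p) ^ (b - 1))) ((gaussianReal 0 v).prod (gaussianReal 0 v)) :=
    ((hint (a - 1) b).const_mul _).add ((hint a (b - 1)).const_mul _)
  have hmap (a b : ℕ) : ∫ z, z ^ a * star z ^ b ∂circularGaussian v =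
      ∫ p, z p ^ a * star (z p) ^ b ∂(gaussianReal 0 v).prod (gaussianReal 0 v) :=
    integral_map (by fun_prop) (by fun_prop)
  have hx (x y : ℝ) : HasDerivAt (fun t : ℝ => z (t, y)) 1 x :=
    ((hasDerivAt_id' x).ofReal_comp.add_const (y * I)).congr_deriv ofReal_one
  have hy (x y : ℝ) : HasDerivAt (fun t : ℝ => z (x, t)) I y :=
    (((hasDerivAt_id' y).ofReal_comp.mul_const I).const_add (x : ℂ)).congr_deriv (by simp)
  have hstein := integral_add_mul_I_mul_gaussianReal_prod
    (fun x y => hasDerivAt_pow_mul_star_pow (hx x y) a b)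
    (fun x y => hasDerivAt_pow_mul_star_pow (hy x y) a b) (hint a b) (hint' _ _) (hint' _ _)
    (by simpa only [pow_succ', mul_assoc] using hint (a + 1) b)
  have hwirtinger (r s : ℂ) :
      (a * 1 * r + b * star 1 * s) + I * (a * I * r + b * star I * s) = 2 * b * s := by
    simp only [star_one, star_def, conj_I]
    linear_combination (a * r - b * s) * I_mul_I
  simp only [hwirtinger, integral_const_mul] at hstein
  rw [hmap, hmap]
  simp only [pow_succ', mul_assoc]
  exact hstein.trans (by ring)

theorem star_integral_pow_mul_star_pow (P : Measure ℂ) (a b : ℕ) :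
    star (∫ z, z ^ a * star z ^ b ∂P) = ∫ z, z ^ b * star z ^ a ∂P := by
  rw [star_def, ← integral_conj]
  simp [mul_comm]

theorem integral_pow_mul_star_pow_succ_circularGaussian (v : ℝ≥0) (a b : ℕ) :
    ∫ z, z ^ a * star z ^ (b + 1) ∂circularGaussian v =
      2 * v * (a * ∫ z, z ^ (a - 1) * star z ^ b ∂circularGaussian v) := by
  rw [← star_integral_pow_mul_star_pow, integral_pow_succ_mul_star_pow_circularGaussian,
    ← star_integral_pow_mul_star_pow _ b (a - 1)]
  simp

end CircularGaussian

section IntegrationByParts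

open scoped ENNReal NNReal

variable {ι Ω : Type*} [MeasurableSpace Ω] {P : Measure Ω} [IsFiniteMeasure P] {z : ι → Ω → ℂ}

/-- The expectation of polynomials in random variables `z i` with moments of all orders and in
their complex conjugates. -/
noncomputable def starPolyExpectation (hz : ∀ i p, p ≠ ∞ → MemLp (z i) p P) :
    MvPolynomial (Bool × ι) ℂ →ₗ[ℂ] ℂ where
  toFun f := ∫ ω, MvPolynomial.eval (withStar (z · ω)) f ∂P
  map_add' f g := by
    simpa using integral_add (integrable_eval_withStar hz f) (integrable_eval_withStar hz g)
  map_smul' a f := by simp [MvPolynomial.smul_eval, integral_const_mul]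

theorem starPolyExpectation_apply (hz : ∀ i p, p ≠ ∞ → MemLp (z i) p P)
    (f : MvPolynomial (Bool × ι) ℂ) :
    starPolyExpectation hz f = ∫ ω, MvPolynomial.eval (withStar (z · ω)) f ∂P := rfl

theorem eval_withStar_monomial [Fintype ι] (x : ι → ℂ) (s : Bool × ι →₀ ℕ) (a : ℂ) :
    MvPolynomial.eval (withStar x) (MvPolynomial.monomial s a) =
      a * ∏ i, x i ^ s (false, i) * star (x i) ^ s (true, i) := by
  rw [MvPolynomial.eval_monomial, Finsupp.prod_fintype _ _ fun _ => pow_zero _]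
  simp [Fintype.prod_prod_type, withStar, Finset.prod_mul_distrib, mul_comm]

theorem starPolyExpectation_monomial [Fintype ι] {v : ℝ≥0}
    (hlaw : ∀ i, HasLaw (z i) (circularGaussian v) P) (hindep : iIndepFun z P)
    (hz : ∀ i p, p ≠ ∞ → MemLp (z i) p P) (s : Bool × ι →₀ ℕ) (a : ℂ) :
    starPolyExpectation hz (MvPolynomial.monomial s a) =
      a * ∏ i, ∫ x, x ^ s (false, i) * star x ^ s (true, i) ∂circularGaussian v := by
  simp only [starPolyExpectation_apply, eval_withStar_monomial, integral_const_mul]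
  rw [hindep.integral_fun_prod_comp (f := fun i x => x ^ s (false, i) * star x ^ s (true, i))
    (fun i => (hlaw i).aemeasurable) fun i => by fun_prop]
  congr! with i
  exact (hlaw i).integral_comp (f := fun x => x ^ s (false, i) * star x ^ s (true, i)) (by fun_prop)

theorem starPolyExpectation_X_mul [Finite ι] {v : ℝ≥0}
    (hlaw : ∀ i, HasLaw (z i) (circularGaussian v) P) (hindep : iIndepFun z P)
    (hz : ∀ i p, p ≠ ∞ → MemLp (z i) p P) (e : Bool) (i : ι) (f : MvPolynomial (Bool × ι) ℂ) :
    starPolyExpectation hz (MvPolynomial.X (e, i) * f) =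
      2 * v * starPolyExpectation hz (MvPolynomial.pderiv (!e, i) f) := by
  classical
  have := Fintype.ofFinite ι
  induction f using MvPolynomial.induction_on' with
  | add f g hf hg => simp only [mul_add, map_add, hf, hg]
  | monomial s a =>
    let moment (t : Bool × ι →₀ ℕ) (j : ι) : ℂ :=
      ∫ x, x ^ t (false, j) * star x ^ t (true, j) ∂circularGaussian v
    have hmonomial (t c) : starPolyExpectation hz (MvPolynomial.monomial t c) =
        c * ∏ j, moment t j := starPolyExpectation_monomial hlaw hindep hz t c
    have hrest (j) (hj : j ∈ Finset.univ.erase i) :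
        moment (Finsupp.single (e, i) 1 + s) j = moment (s - Finsupp.single (!e, i) 1) j := by
      simp [moment, (Finset.ne_of_mem_erase hj).symm]
    have hself : moment (Finsupp.single (e, i) 1 + s) i =
        2 * v * (s (!e, i) * moment (s - Finsupp.single (!e, i) 1) i) := by
      cases e
      · simpa [moment, add_comm 1] using integral_pow_succ_mul_star_pow_circularGaussian v _ _
      · simpa [moment, add_comm 1] using integral_pow_mul_star_pow_succ_circularGaussian v _ _
    rw [MvPolynomial.X, MvPolynomial.monomial_mul, MvPolynomial.pderiv_monomial, hmonomial,
      hmonomial, ← Finset.mul_prod_erase _ _ (Finset.mem_univ i),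
      ← Finset.mul_prod_erase _ _ (Finset.mem_univ i), Finset.prod_congr rfl hrest, hself]
    ring

end IntegrationByParts

section GaussianMatrix

open scoped ENNReal NNReal

section FixedSize

variable {n Ω : Type*}

/-- The letter `false` names a matrix and the letter `true` its conjugate transpose. -/
def starLetter (Z : Matrix n n ℂ) (e : Bool) : Matrix n n ℂ := if e then Zᴴ else Z

/-- The variable of `MvPolynomial (Bool × (n × n)) ℂ` standing, in the sense of `withStar`, for the
`(i, j)` entry of `starLetter Z e`. -/
def starVar (e : Bool) (i j : n) : Bool × (n × n) := (e, if e then (j, i) else (i, j))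

theorem starVar_not_swap (e : Bool) (i j : n) : starVar (!e) j i = (!e, (starVar e i j).2) := by
  cases e <;> rfl

theorem starVar_inj {e e' : Bool} {i j i' j' : n} :
    starVar e i j = starVar e' i' j' ↔ e = e' ∧ i = i' ∧ j = j' := by
  cases e <;> cases e' <;> simp [starVar, and_comm]

/-- The generic matrix (`e = false`) and its formal adjoint (`e = true`). -/
noncomputable def starGeneric (n : Type*) (e : Bool) :
    Matrix n n (MvPolynomial (Bool × (n × n)) ℂ) :=
  Matrix.of fun i j => MvPolynomial.X (starVar e i j)

theorem map_eval_starGeneric (Z : Matrix n n ℂ) (e : Bool) :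
    (starGeneric n e).map (MvPolynomial.eval (withStar fun p : n × n => Z p.1 p.2)) =
      starLetter Z e := by
  ext i j
  cases e <;> simp [starGeneric, starVar, withStar, starLetter]

theorem map_pderiv_starGeneric [DecidableEq n] (a : Bool) (i j : n) (b : Bool) :
    (starGeneric n b).map (MvPolynomial.pderiv (starVar a i j)) =
      if b = a then Matrix.single i j 1 else 0 := by
  ext1 k l
  have h : starVar b k l = starVar a i j ↔ b = a ∧ i = k ∧ j = l := by
    rw [starVar_inj, eq_comm (a := i), eq_comm (a := j)]
  rw [Matrix.map_apply, starGeneric, Matrix.of_apply, MvPolynomial.pderiv_X, Pi.single_apply]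
  obtain rfl | hba := eq_or_ne b a
  · simp [h, Matrix.single_apply]
  · simp [h, hba]

variable [Fintype n] [DecidableEq n] [MeasurableSpace Ω] {P : Measure Ω} {Z : Ω → Matrix n n ℂ}

theorem starPolyExpectation_traceProd_starGeneric [IsFiniteMeasure P]
    (hZ : ∀ (p : n × n) q, q ≠ ∞ → MemLp (fun ω => Z ω p.1 p.2) q P) (W : List (List Bool)) :
    starPolyExpectation hZ (traceProd (starGeneric n) W) =
      ∫ ω, traceProd (starLetter (Z ω)) W ∂P := by
  simp only [starPolyExpectation_apply, map_traceProd, map_eval_starGeneric]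

theorem integral_traceProd_starLetter_cons {v : ℝ≥0}
    (hlaw : ∀ p : n × n, HasLaw (fun ω => Z ω p.1 p.2) (circularGaussian v) P)
    (hindep : iIndepFun (fun (p : n × n) ω => Z ω p.1 p.2) P)
    (e : Bool) (w : List Bool) (W : List (List Bool)) :
    ∫ ω, traceProd (starLetter (Z ω)) ((e :: w) :: W) ∂P = 2 * v * (
      ∑ p : Fin w.length with w[p] = !e,
        ∫ ω, traceProd (starLetter (Z ω)) (w.take p :: w.drop (p + 1) :: W) ∂P +
      ∑ J : Fin W.length, ∑ q : Fin W[J].length with W[J][q] = !e,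
        ∫ ω, traceProd (starLetter (Z ω))
          ((w ++ (W[J].drop (q + 1) ++ W[J].take q)) :: W.eraseIdx J) ∂P) := by
  have := hindep.isProbabilityMeasure
  have hZ (p : n × n) q (hq : q ≠ ∞) := memLp_of_hasLaw_circularGaussian (hlaw p) hq
  simp only [← starPolyExpectation_traceProd_starGeneric hZ]
  refine loop_equation (τ := (!·)) (c := (2 * v : ℂ)) map_pderiv_starGeneric
    (fun a i j f => ?_) e w W
  rw [starVar_not_swap, smul_eq_mul, ← starPolyExpectation_X_mul hlaw hindep]
  rfl

end FixedSize

theorem tendsto_integral_traceProd_starLetter {Ω : ℕ → Type*} [∀ N, MeasurableSpace (Ω N)]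
    {P : ∀ N, Measure (Ω N)} {Z : ∀ N, Ω N → Matrix (Fin N) (Fin N) ℂ}
    (hlaw : ∀ N (p : Fin N × Fin N),
      HasLaw (fun ω => Z N ω p.1 p.2) (circularGaussian (1 / (2 * N))) (P N))
    (hindep : ∀ N, iIndepFun (fun (p : Fin N × Fin N) ω => Z N ω p.1 p.2) (P N))
    (W : List (List Bool)) :
    Tendsto (fun N : ℕ => (1 / (N : ℂ)) ^ W.length *
        ∫ ω, traceProd (starLetter (Z N ω)) W ∂P N)
      atTop (nhds ((W.map fun w => (ncPairingCount (!·) w : ℂ)).prod)) := by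
  have hδ : Tendsto (fun N : ℕ => (1 / (N : ℂ)) ^ 2) atTop (nhds 0) := by
    simpa using (tendsto_one_div_atTop_nhds_zero_nat (𝕜 := ℂ)).pow 2
  refine tendsto_prod_ncPairingCount (φ := fun (N : ℕ) W => (1 / (N : ℂ)) ^ W.length *
    ∫ ω, traceProd (starLetter (Z N ω)) W ∂P N) hδ ?_ ?_ ?_ W
  · refine Eventually.of_forall fun N => ?_
    have := (hindep N).isProbabilityMeasure
    simp
  · filter_upwards [eventually_ne_atTop 0] with N hN W
    have hN' : (N : ℂ) ≠ 0 := by exact_mod_cast hN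
    simp only [traceProd_cons, wordProd_nil, Matrix.trace_one, Fintype.card_fin, List.length_cons,
      integral_const_mul, pow_succ]
    field_simp
  · filter_upwards [eventually_ne_atTop 0] with N hN e w W
    rw [integral_traceProd_starLetter_cons (hlaw N) (hindep N)]
    have herase (J : Fin W.length) : (W.eraseIdx J).length + 1 = W.length := by
      rw [List.length_eraseIdx_of_lt J.2]
      have := J.2
      omega
    have hvar : 2 * ((1 / (2 * N) : ℝ≥0) : ℂ) = 1 / (N : ℂ) := by
      push_cast
      field_simp
    simp only [List.length_cons, herase, ← Finset.mul_sum, hvar]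
    ring

theorem hasLaw_gaussMatrix (N : ℕ) (p : Fin N × Fin N) :
    HasLaw (fun ω => gaussMatrix ω p.1 p.2) (circularGaussian (1 / (2 * N)))
      (gaussMatrixMeasure N) := by
  let ν : Measure (ℝ × ℝ) := (gaussianReal 0 (1 / 2)).prod (gaussianReal 0 (1 / 2))
  have hentry : HasLaw (fun ω : Fin N → Fin N → ℝ × ℝ => ω p.1 p.2) ν (gaussMatrixMeasure N) :=
    (measurePreserving_eval (fun _ => ν) p.2).hasLaw.comp
      (measurePreserving_eval (fun _ => Measure.pi fun _ => ν) p.1).hasLaw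
  have hcirc : HasLaw (fun x : ℝ × ℝ => (x.1 : ℂ) + x.2 * I) (circularGaussian (1 / 2)) ν :=
    ⟨by fun_prop, rfl⟩
  have hvar : (1 / 2 : ℝ≥0) / .mk (√N ^ 2) (sq_nonneg _) = 1 / (2 * N) := by
    ext
    simp [div_eq_mul_inv, mul_comm]
  have hdiv := hasLaw_div_circularGaussian (1 / 2) √N
  rw [hvar] at hdiv
  exact (hdiv.comp hcirc).comp hentry

theorem iIndepFun_gaussMatrix (N : ℕ) :
    iIndepFun (fun (p : Fin N × Fin N) ω => gaussMatrix ω p.1 p.2) (gaussMatrixMeasure N) := by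
  have h := iIndepFun_uncurry_infinitePi' (ι := Fin N) (κ := Fin N)
    (X := fun _ _ (x : ℝ × ℝ) => ((x.1 : ℂ) + x.2 * I) / (Real.sqrt N : ℂ))
    (fun _ _ => (gaussianReal 0 (1 / 2)).prod (gaussianReal 0 (1 / 2))) (by fun_prop)
  simp only [Measure.infinitePi_eq_pi] at h
  exact h

end GaussianMatrix

/-- For a word `Z^{ε₁} ⋯ Z^{ε_k}` in a Gaussian matrix `Z = Z_N` and its adjoint
(`ε i = true` meaning the adjoint `Z*`), the normalized expected trace converges, as
`N → ∞`, to the number of non-crossing pairings `π` of `{1,…,k}` such that `ε_a ≠ ε_b`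
for every pair `{a,b} ∈ π`. -/
theorem gaussMatrix_word_moment_limit (k : ℕ) (ε : Fin k → Bool) :
    Tendsto
      (fun N : ℕ => ∫ ω, (1 / (N : ℂ)) *
          (((List.finRange k).map fun i =>
              if ε i then (gaussMatrix ω)ᴴ else gaussMatrix ω).prod).trace
          ∂(gaussMatrixMeasure N))
      atTop
      (nhds ((Nat.card {π : Finpartition (Finset.univ : Finset (Fin k)) //
          IsPairing π ∧ IsNonCrossing π ∧
            ∀ B ∈ π.parts, ∀ a ∈ B, ∀ b ∈ B, a ≠ b → ε a ≠ ε b} : ℕ) : ℂ)) := by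
  have hlim := tendsto_integral_traceProd_starLetter hasLaw_gaussMatrix iIndepFun_gaussMatrix
    [(List.finRange k).map ε]
  rw [card_ncPairing_ne]
  simpa [traceProd_cons, wordProd, starLetter, Function.comp_def, integral_const_mul] using hlim
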